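/- Let H₁ and H₂ be connected combinatorial hypermaps on disjoint flag sets, and let H₁ ⊕ H₂ be a bar-amalgamation of H₁ and H₂ (the connecting hyperedge meeting one corner of H₁ and one corner of H₂). Then the partial-dual Euler-genus polynomial satisfies ∂ε_{H₁ ⊕ H₂}(z) = 2 · ∂ε_{H₁}(z) · ∂ε_{H₂}(z). -/

import Mathlib

open Classical

/-- A pre-hypermap on a set of flags `F`: three structure maps `θ₀, θ₁, θ₂`.
It is a genuine combinatorial hypermap when the three maps are
fixed-point-free involutions (see `PreHypermap.IsHypermap`). -/
structure PreHypermap (F : Type*) where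
  theta : Fin 3 → F → F

namespace PreHypermap

variable {F : Type*}

/-- `H` is a combinatorial hypermap: `θ₀, θ₁, θ₂` are fixed-point-free involutions. -/
def IsHypermap (H : PreHypermap F) : Prop :=
  ∀ i : Fin 3, Function.Involutive (H.theta i) ∧ ∀ x : F, H.theta i x ≠ x

/-- The equivalence relation on `F` generated by a set of functions `F → F`;
for a set of involutions, two flags are related iff they are in the same orbit
of the subgroup generated by those involutions. -/
def orbitRel (fs : Set (F → F)) : F → F → Prop :=
  Relation.EqvGen (fun x y => ∃ f ∈ fs, f x = y)

/-- The setoid of orbits of the subgroup generated by a set of involutions. -/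
def orbitSetoid (fs : Set (F → F)) : Setoid F :=
  Relation.EqvGen.setoid (fun x y => ∃ f ∈ fs, f x = y)

/-- The number of orbits on `F` of the subgroup generated by a set of involutions. -/
noncomputable def orbitCount (fs : Set (F → F)) : ℕ :=
  Nat.card (Quotient (orbitSetoid fs))

/-- `v H`: the number of vertices, i.e. orbits of `⟨θ₁, θ₂⟩`. -/
noncomputable def v (H : PreHypermap F) : ℕ := orbitCount {H.theta 1, H.theta 2}

/-- `e H`: the number of hyperedges, i.e. orbits of `⟨θ₀, θ₂⟩`. -/
noncomputable def e (H : PreHypermap F) : ℕ := orbitCount {H.theta 0, H.theta 2}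

/-- `f H`: the number of faces, i.e. orbits of `⟨θ₀, θ₁⟩`. -/
noncomputable def f (H : PreHypermap F) : ℕ := orbitCount {H.theta 0, H.theta 1}

/-- `c H`: the number of components, i.e. orbits of `⟨θ₀, θ₁, θ₂⟩`. -/
noncomputable def c (H : PreHypermap F) : ℕ :=
  orbitCount {H.theta 0, H.theta 1, H.theta 2}

/-- `H` is connected if it has exactly one component. -/
def Connected (H : PreHypermap F) : Prop := H.c = 1

/-- The Euler characteristic `χ(H) = v + e + f - |F|/2`. -/
noncomputable def chi (H : PreHypermap F) : ℤ :=
  (H.v : ℤ) + (H.e : ℤ) + (H.f : ℤ) - (Nat.card F : ℤ) / 2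

/-- The Euler genus `ε(H) = 2 c(H) - χ(H)`. -/
noncomputable def eulerGenus (H : PreHypermap F) : ℤ := 2 * (H.c : ℤ) - H.chi

/-- `H` is orientable: there is `o : F → {+1, -1}` with `o (θᵢ x) = - o x` for all `i, x`. -/
def Orientable (H : PreHypermap F) : Prop :=
  ∃ o : F → ℤ, (∀ x : F, o x = 1 ∨ o x = -1) ∧
    ∀ (i : Fin 3) (x : F), o (H.theta i x) = - o x

/-- The set `E(H)` of hyperedges of `H`, each hyperedge being its set of flags
(an orbit of `⟨θ₀, θ₂⟩`). -/
def edges (H : PreHypermap F) : Set (Set F) :=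
  {s : Set F | ∃ x : F, s = {y : F | orbitRel {H.theta 0, H.theta 2} x y}}

/-- The geometric dual `H* = (F, θ₂, θ₁, θ₀)`. -/
def dual (H : PreHypermap F) : PreHypermap F where
  theta := fun i => H.theta (2 - i)

/-- The partial dual of `H` with respect to a set `S` of flags (interchange `θ₀` and
`θ₂` on `S`); for `A ⊆ E(H)` the partial dual `H^A` is `H.pdual (⋃₀ A)`. -/
noncomputable def pdual (H : PreHypermap F) (S : Set F) : PreHypermap F where
  theta := fun i x =>
    if i = 1 then H.theta 1 x
    else if x ∈ S then H.theta (2 - i) x else H.theta i x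

/-- `f(A)` for `A ⊆ E(H)`: the number of orbits of `⟨θ₁, θ₂^A⟩` (which equals `v(H^A)`). -/
noncomputable def subf (H : PreHypermap F) (A : Set (Set F)) : ℕ :=
  (H.pdual (⋃₀ A)).v

/-- `c(A)` for `A ⊆ E(H)`: the number of orbits of the subgroup generated by `θ₁`, `θ₂`
and the permutation equal to `θ₀` on `S(A)` and the identity elsewhere. -/
noncomputable def subc (H : PreHypermap F) (A : Set (Set F)) : ℕ :=
  orbitCount {H.theta 1, H.theta 2, fun x => if x ∈ ⋃₀ A then H.theta 0 x else x}

/-- `χ(A) = v(A) + e(A) + f(A) - |S(A)|/2` for `A ⊆ E(H)`, where `v(A) = v(H)`,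
`e(A) = |A|`, `f(A) = v(H^A)` and `S(A) = ⋃₀ A`. -/
noncomputable def subchi (H : PreHypermap F) (A : Set (Set F)) : ℤ :=
  (H.v : ℤ) + (A.ncard : ℤ) + (H.subf A : ℤ) - ((⋃₀ A).ncard : ℤ) / 2

/-- `ε(A) = 2 c(A) - χ(A)` for `A ⊆ E(H)`. -/
noncomputable def subeps (H : PreHypermap F) (A : Set (Set F)) : ℤ :=
  2 * (H.subc A : ℤ) - H.subchi A

/-- The hyperedge set of `H` as a finset. -/
noncomputable def edgeFinset (H : PreHypermap F) [Fintype F] : Finset (Set F) :=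
  (Set.toFinite H.edges).toFinset

/-- The partial-dual Euler-genus polynomial `∂ε_H(z) = Σ_{A ⊆ E(H)} z^(ε(H^A))`. -/
noncomputable def pdPoly (H : PreHypermap F) [Fintype F] : Polynomial ℕ :=
  ∑ A ∈ H.edgeFinset.powerset,
    Polynomial.X ^ ((H.pdual (⋃₀ (A : Set (Set F)))).eulerGenus).toNat

/-- The partial-dual orientable-genus polynomial `∂Γ_H(z) = Σ_{A ⊆ E(H)} z^(ε(H^A)/2)`. -/
noncomputable def pdGammaPoly (H : PreHypermap F) [Fintype F] : Polynomial ℕ :=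
  ∑ A ∈ H.edgeFinset.powerset,
    Polynomial.X ^ (((H.pdual (⋃₀ (A : Set (Set F)))).eulerGenus) / 2).toNat

/-- The join `H₁ ∨ H₂` of two hypermaps on disjoint flag sets, joining the corner
`{x, θ₁ x}` of `H₁` to the corner `{y, θ₁′ y}` of `H₂`. -/
noncomputable def join {F₁ F₂ : Type*} (H₁ : PreHypermap F₁) (H₂ : PreHypermap F₂)
    (x : F₁) (y : F₂) : PreHypermap (F₁ ⊕ F₂) where
  theta := fun i z =>
    if i = 1 then
      if z = Sum.inl x then Sum.inr y
      else if z = Sum.inr y then Sum.inl x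
      else if z = Sum.inl (H₁.theta 1 x) then Sum.inr (H₂.theta 1 y)
      else if z = Sum.inr (H₂.theta 1 y) then Sum.inl (H₁.theta 1 x)
      else Sum.map (H₁.theta 1) (H₂.theta 1) z
    else Sum.map (H₁.theta i) (H₂.theta i) z

/-- The bar-amalgamation `H₁ ⊕ H₂` of two hypermaps on disjoint flag sets, with a new
connecting hyperedge `{p, q, p', q'} = Fin 4` meeting the corner `{x, θ₁ x}` of `H₁`
and the corner `{y, θ₁′ y}` of `H₂`. -/
noncomputable def bar {F₁ F₂ : Type*} (H₁ : PreHypermap F₁) (H₂ : PreHypermap F₂)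
    (x : F₁) (y : F₂) : PreHypermap ((F₁ ⊕ F₂) ⊕ Fin 4) where
  theta := fun i z =>
    if i = 0 then
      match z with
      | .inl (.inl a) => .inl (.inl (H₁.theta 0 a))
      | .inl (.inr b) => .inl (.inr (H₂.theta 0 b))
      | .inr k => .inr (Equiv.swap (0 : Fin 4) 2 (Equiv.swap (1 : Fin 4) 3 k))
    else if i = 2 then
      match z with
      | .inl (.inl a) => .inl (.inl (H₁.theta 2 a))
      | .inl (.inr b) => .inl (.inr (H₂.theta 2 b))
      | .inr k => .inr (Equiv.swap (0 : Fin 4) 1 (Equiv.swap (2 : Fin 4) 3 k))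
    else
      if z = .inl (.inl x) then .inr 0
      else if z = .inr 0 then .inl (.inl x)
      else if z = .inl (.inl (H₁.theta 1 x)) then .inr 1
      else if z = .inr 1 then .inl (.inl (H₁.theta 1 x))
      else if z = .inl (.inr y) then .inr 2
      else if z = .inr 2 then .inl (.inr y)
      else if z = .inl (.inr (H₂.theta 1 y)) then .inr 3
      else if z = .inr 3 then .inl (.inr (H₂.theta 1 y))
      else
        match z with
        | .inl (.inl a) => .inl (.inl (H₁.theta 1 a))
        | .inl (.inr b) => .inl (.inr (H₂.theta 1 b))
        | .inr k => .inr k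

end PreHypermap

/-!
For a partial dual of `H₁ ⊕ H₂` that leaves the connecting hyperedge alone, partial duality commutes
with bar-amalgamation, and one that dualizes the connecting hyperedge is the dual of one that does
not. Since the dual has the same Euler genus, the factor `2` counts the two choices for the
connecting hyperedge, and everything reduces to `ε(H₁ ⊕ H₂) = ε(H₁) + ε(H₂)`.

Orbits are counted as dimensions of spaces of invariant functions over `ZMod 2`. The connecting
hyperedge cuts the corners `{x, θ₁ x}` and `{y, θ₁ y}`, and by a parity argument a function that is
invariant under `θ₀`, and under `θ₁` away from `{x, θ₁ x}`, still satisfies `g (θ₁ x) = g x`. Hence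
the functions on `H₁ ⊕ H₂` constant on vertices are those of the disjoint union of `H₁` and `H₂`,
while for faces and for components the only additional condition is `g x = g y`. So `v` is additive,
`f` and `c` drop by one, `e` grows by one, and half the number of flags grows by two.

The exponents in the polynomial are natural numbers, so `ε ≥ 0` is needed too. It holds because
functions on the flags sharing an invariance under some `θᵢ` are orthogonal over `ZMod 2`, so that
`Inv(θ₁, θ₂) + Inv(θ₀)` and `Inv(θ₀, θ₁) + Inv(θ₀, θ₂)` are orthogonal to each other.
-/

namespace PreHypermap

/-! ### Invariant functions and orbit counts -/

section Invariant

variable {F α : Type*} {fs gs : Set (F → F)} {a : F → F} {g : F → α}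

/-- `g` is constant along every map of `fs`. When `fs` consists of involutions this says that `g`
is constant on the orbits. The codomain is arbitrary: for `α = Prop` the invariant functions are
the unions of orbits, and for a field they form a vector space with one dimension per orbit. -/
def IsInvariant (fs : Set (F → F)) (g : F → α) : Prop :=
  ∀ f ∈ fs, ∀ x, g (f x) = g x

lemma isInvariant_singleton : IsInvariant {a} g ↔ ∀ x, g (a x) = g x := by
  simp [IsInvariant]

lemma isInvariant_union : IsInvariant (fs ∪ gs) g ↔ IsInvariant fs g ∧ IsInvariant gs g := by
  simp only [IsInvariant, Set.mem_union, or_imp, forall_and]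

lemma isInvariant_insert : IsInvariant (insert a fs) g ↔ IsInvariant {a} g ∧ IsInvariant fs g := by
  rw [Set.insert_eq, isInvariant_union]

lemma IsInvariant.eq_of_orbitRel (hg : IsInvariant fs g) {x y : F} (h : orbitRel fs x y) :
    g x = g y := by
  induction h with
  | rel x _ h =>
    obtain ⟨f, hf, rfl⟩ := h
    exact (hg f hf x).symm
  | refl => rfl
  | symm _ _ _ ih => exact ih.symm
  | trans _ _ _ _ _ ih₁ ih₂ => exact ih₁.trans ih₂

lemma isInvariant_quotientMk (fs : Set (F → F)) :
    IsInvariant fs (Quotient.mk (orbitSetoid fs)) := fun f hf _ =>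
  Quotient.sound (Relation.EqvGen.symm _ _ (Relation.EqvGen.rel _ _ ⟨f, hf, rfl⟩))

/-- The space of `K`-valued functions invariant under `fs`. Its dimension is the number of orbits,
which turns orbit counting into linear algebra. -/
def invariants (K : Type*) [Semiring K] (fs : Set (F → F)) : Submodule K (F → K) where
  carrier := {g | IsInvariant fs g}
  add_mem' hg hg' f hf x := congrArg₂ (· + ·) (hg f hf x) (hg' f hf x)
  zero_mem' _ _ _ := rfl
  smul_mem' c _ hg f hf x := congrArg (c • ·) (hg f hf x)

lemma mem_invariants {K : Type*} [Semiring K] {g : F → K} :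
    g ∈ invariants K fs ↔ IsInvariant fs g := Iff.rfl

lemma invariants_union (K : Type*) [Semiring K] (fs gs : Set (F → F)) :
    invariants K (fs ∪ gs) = invariants K fs ⊓ invariants K gs := by
  ext g
  exact isInvariant_union

lemma invariants_eq_range_funLeft (K : Type*) [Semiring K] (fs : Set (F → F)) :
    invariants K fs = LinearMap.range (LinearMap.funLeft K K (Quotient.mk (orbitSetoid fs))) := by
  ext g
  constructor
  · intro hg
    exact ⟨Quotient.lift g fun _ _ h => hg.eq_of_orbitRel h, rfl⟩
  · rintro ⟨q, rfl⟩ f hf x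
    exact congrArg q (isInvariant_quotientMk fs f hf x)

lemma finrank_invariants (K : Type*) [Ring K] [StrongRankCondition K] [Finite F]
    (fs : Set (F → F)) : Module.finrank K (invariants K fs) = orbitCount fs := by
  have := Fintype.ofFinite (Quotient (orbitSetoid fs))
  rw [invariants_eq_range_funLeft, LinearMap.finrank_range_of_inj
    (LinearMap.funLeft_injective_of_surjective K K _ Quotient.mk_surjective),
    Module.finrank_fintype_fun_eq_card, orbitCount, Nat.card_eq_fintype_card]

end Invariant

/-! ### Fixed-point-free involutions in characteristic two -/

section CharTwo

variable {F K : Type*} {a b : F → F}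

lemma sum_eq_zero_of_involutive [Ring K] [CharP K 2] (ha : Function.Involutive a)
    (ha' : ∀ z, a z ≠ z) {g : F → K} {s : Finset F} (hs : ∀ z ∈ s, a z ∈ s)
    (hg : ∀ z ∈ s, g (a z) = g z) : ∑ z ∈ s, g z = 0 :=
  Finset.sum_involution (fun z _ => a z)
    (fun z hz => by rw [hg z hz, CharTwo.add_self_eq_zero]) (fun z _ _ => ha' z) hs fun z _ => ha z

lemma even_card_of_involutive [Finite F] (ha : Function.Involutive a) (ha' : ∀ z, a z ≠ z) :
    Even (Nat.card F) := by
  have := Fintype.ofFinite F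
  have hsum : ∑ _z : F, (1 : ZMod 2) = 0 :=
    sum_eq_zero_of_involutive ha ha' (fun _ _ => Finset.mem_univ _) fun _ _ => rfl
  rw [Finset.sum_const, nsmul_one, Finset.card_univ, ZMod.natCast_eq_zero_iff_even] at hsum
  rwa [Nat.card_eq_fintype_card]

lemma card_le_two_mul_orbitCount_singleton [Finite F] (ha : Function.Involutive a) :
    Nat.card F ≤ 2 * orbitCount {a} := by
  have := Fintype.ofFinite F
  let T : (F → ZMod 2) →ₗ[ZMod 2] (F → ZMod 2) :=
    LinearMap.id + LinearMap.funLeft (ZMod 2) (ZMod 2) a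
  have T_apply (g z) : T g z = g z + g (a z) := rfl
  have ker_T : LinearMap.ker T = invariants (ZMod 2) {a} := by
    ext g
    simp only [LinearMap.mem_ker, mem_invariants, isInvariant_singleton, funext_iff, T_apply,
      Pi.zero_apply, CharTwo.add_eq_zero, eq_comm]
  have range_le_ker : LinearMap.range T ≤ LinearMap.ker T := by
    rw [LinearMap.range_le_ker_iff]
    refine LinearMap.ext fun g => funext fun z => ?_
    simp only [LinearMap.comp_apply, T_apply, ha z, add_comm (g (a z)), CharTwo.add_self_eq_zero,
      LinearMap.zero_apply, Pi.zero_apply]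
  have rank_nullity := T.finrank_range_add_finrank_ker
  have range_rank_le := Submodule.finrank_mono range_le_ker
  rw [ker_T, finrank_invariants] at rank_nullity range_rank_le
  rw [Module.finrank_fintype_fun_eq_card] at rank_nullity
  rw [Nat.card_eq_fintype_card]
  omega

lemma dotProduct_eq_zero_of_isInvariant [Fintype F] [Ring K] [CharP K 2]
    (ha : Function.Involutive a) (ha' : ∀ z, a z ≠ z) {fs gs : Set (F → F)} (hfs : a ∈ fs)
    (hgs : a ∈ gs) {g h : F → K} (hg : IsInvariant fs g) (hh : IsInvariant gs h) : g ⬝ᵥ h = 0 :=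
  sum_eq_zero_of_involutive ha ha' (fun _ _ => Finset.mem_univ _)
    fun z _ => by rw [hg a hfs z, hh a hgs z]

/-- `g` is invariant under `a` except possibly across the corner `{x, a x}`, which is where the
bar-amalgamation cuts the involution of index `1`. -/
def IsInvariantOffCorner {α : Type*} (a : F → F) (x : F) (g : F → α) : Prop :=
  ∀ z, z ≠ x → z ≠ a x → g (a z) = g z

lemma isInvariant_iff_offCorner {α : Type*} (ha : Function.Involutive a) (x : F) {g : F → α} :
    IsInvariant {a} g ↔ IsInvariantOffCorner a x g ∧ g (a x) = g x := by
  rw [isInvariant_singleton]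
  refine ⟨fun hg => ⟨fun z _ _ => hg z, hg x⟩, fun ⟨hoff, hx⟩ z => ?_⟩
  by_cases hzx : z = x
  · rw [hzx, hx]
  by_cases hzax : z = a x
  · rw [hzax, ha, hx]
  · exact hoff z hzx hzax

/-- Summing `g` over all flags gives `0` because of `a`, and summing it over all flags but `x` and
`b x` gives `0` because of `b`. -/
lemma IsInvariantOffCorner.apply_eq [Finite F] [Ring K] [CharP K 2]
    (ha : Function.Involutive a) (ha' : ∀ z, a z ≠ z)
    (hb : Function.Involutive b) (hb' : ∀ z, b z ≠ z) {g : F → K} {x : F}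
    (hoff : IsInvariantOffCorner b x g) (hg : IsInvariant {a} g) : g (b x) = g x := by
  have := Fintype.ofFinite F
  have sum_univ : ∑ z, g z = 0 :=
    sum_eq_zero_of_involutive ha ha' (fun _ _ => Finset.mem_univ _)
      fun z _ => isInvariant_singleton.1 hg z
  have sum_compl : ∑ z ∈ {x, b x}ᶜ, g z = 0 := by
    refine sum_eq_zero_of_involutive hb hb' (fun z hz => ?_) fun z hz => ?_ <;>
      simp only [Finset.mem_compl, Finset.mem_insert, Finset.mem_singleton, not_or] at hz ⊢
    · exact ⟨fun h => hz.2 (hb.eq_iff.1 h), fun h => hz.1 (hb.injective h)⟩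
    · exact hoff z hz.1 hz.2
  rw [← Finset.sum_add_sum_compl {x, b x} g, sum_compl, add_zero,
    Finset.sum_pair (hb' x).symm, CharTwo.add_eq_zero] at sum_univ
  exact sum_univ.symm

end CharTwo

/-! ### Nonnegativity of the Euler genus -/

section EulerGenus

variable {F : Type*}

lemma finrank_add_finrank_le_of_dotProduct_eq_zero {K : Type*} [Field K] [Fintype F]
    {U W : Submodule K (F → K)} (h : ∀ g ∈ U, ∀ g' ∈ W, g ⬝ᵥ g' = 0) :
    Module.finrank K U + Module.finrank K W ≤ Fintype.card F := by
  let B : LinearMap.BilinForm K (F → K) := dotProductBilin K K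
  have ker_B : LinearMap.ker B = ⊥ :=
    LinearMap.ker_eq_bot'.2 fun g hg => dotProduct_eq_zero g fun g' => LinearMap.congr_fun hg g'
  have W_le : W ≤ B.orthogonal U := fun g' hg' g hg => h g hg g' hg'
  have rank_orthogonal := B.finrank_add_finrank_orthogonal' U
  rw [ker_B, inf_bot_eq, finrank_bot, add_zero, Module.finrank_fintype_fun_eq_card]
    at rank_orthogonal
  exact rank_orthogonal ▸ Nat.add_le_add_left (Submodule.finrank_mono W_le) _

lemma IsHypermap.dotProduct_eq_zero [Fintype F] {H : PreHypermap F} (h : H.IsHypermap)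
    {g g' : F → ZMod 2}
    (hg : g ∈ invariants (ZMod 2) {H.theta 1, H.theta 2} ⊔ invariants (ZMod 2) {H.theta 0})
    (hg' : g' ∈ invariants (ZMod 2) {H.theta 0, H.theta 1} ⊔
      invariants (ZMod 2) {H.theta 0, H.theta 2}) : g ⬝ᵥ g' = 0 := by
  obtain ⟨g₁₂, hg₁₂, g₀, hg₀, rfl⟩ := Submodule.mem_sup.1 hg
  obtain ⟨g₀₁, hg₀₁, g₀₂, hg₀₂, rfl⟩ := Submodule.mem_sup.1 hg'
  have zero (i : Fin 3) {fs gs : Set (F → F)} {k k' : F → ZMod 2} (hk : k ∈ invariants _ fs)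
      (hk' : k' ∈ invariants _ gs) (hfs : H.theta i ∈ fs) (hgs : H.theta i ∈ gs) : k ⬝ᵥ k' = 0 :=
    dotProduct_eq_zero_of_isInvariant (h i).1 (h i).2 hfs hgs hk hk'
  rw [add_dotProduct, dotProduct_add, dotProduct_add,
    zero 1 hg₁₂ hg₀₁ (by simp) (by simp), zero 2 hg₁₂ hg₀₂ (by simp) (by simp),
    zero 0 hg₀ hg₀₁ (by simp) (by simp), zero 0 hg₀ hg₀₂ (by simp) (by simp)]
  simp only [add_zero]

lemma IsHypermap.v_add_orbitCount_theta_zero_add_f_add_e_le [Finite F] {H : PreHypermap F}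
    (h : H.IsHypermap) :
    H.v + orbitCount {H.theta 0} + H.f + H.e ≤ Nat.card F + 2 * H.c := by
  have := Fintype.ofFinite F
  have inf₁ : invariants (ZMod 2) {H.theta 1, H.theta 2} ⊓ invariants (ZMod 2) {H.theta 0}
      = invariants (ZMod 2) {H.theta 0, H.theta 1, H.theta 2} := by
    rw [inf_comm, ← invariants_union, ← Set.insert_eq]
  have inf₂ : invariants (ZMod 2) {H.theta 0, H.theta 1} ⊓
      invariants (ZMod 2) {H.theta 0, H.theta 2}
      = invariants (ZMod 2) {H.theta 0, H.theta 1, H.theta 2} := by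
    rw [← invariants_union, ← Set.insert_union_distrib, ← Set.insert_eq]
  have dim₁ := Submodule.finrank_sup_add_finrank_inf_eq
    (invariants (ZMod 2) {H.theta 1, H.theta 2}) (invariants (ZMod 2) {H.theta 0})
  have dim₂ := Submodule.finrank_sup_add_finrank_inf_eq
    (invariants (ZMod 2) {H.theta 0, H.theta 1}) (invariants (ZMod 2) {H.theta 0, H.theta 2})
  have dim_le := finrank_add_finrank_le_of_dotProduct_eq_zero fun _ hg _ hg' =>
    h.dotProduct_eq_zero hg hg'
  rw [inf₁] at dim₁
  rw [inf₂] at dim₂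
  simp only [finrank_invariants] at dim₁ dim₂
  rw [Nat.card_eq_fintype_card]
  unfold v e PreHypermap.f c
  omega

lemma IsHypermap.eulerGenus_nonneg [Finite F] {H : PreHypermap F} (h : H.IsHypermap) :
    0 ≤ H.eulerGenus := by
  have bound := h.v_add_orbitCount_theta_zero_add_f_add_e_le
  have half := card_le_two_mul_orbitCount_singleton (h 0).1
  have even := (even_card_of_involutive (h 0).1 (h 0).2).two_dvd
  unfold eulerGenus chi
  omega

end EulerGenus

/-! ### Disjoint unions -/

section DisjointUnion

variable {F₁ F₂ α : Type*}

/-- The hypermap `H₁ ⊔ H₂`, into which the bar-amalgamation falls apart when its connecting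
hyperedge is removed and the two cut corners are restored. -/
def disjointUnion (H₁ : PreHypermap F₁) (H₂ : PreHypermap F₂) : PreHypermap (F₁ ⊕ F₂) where
  theta i := Sum.map (H₁.theta i) (H₂.theta i)

lemma isInvariant_disjointUnion {H₁ : PreHypermap F₁} {H₂ : PreHypermap F₂} (I : Set (Fin 3))
    {g : F₁ ⊕ F₂ → α} :
    IsInvariant ((H₁.disjointUnion H₂).theta '' I) g ↔
      IsInvariant (H₁.theta '' I) (g ∘ Sum.inl) ∧ IsInvariant (H₂.theta '' I) (g ∘ Sum.inr) := by
  simp only [IsInvariant, Set.forall_mem_image, Sum.forall, forall_and]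
  rfl

lemma isInvariant_disjointUnion_theta {H₁ : PreHypermap F₁} {H₂ : PreHypermap F₂} (i : Fin 3)
    {g : F₁ ⊕ F₂ → α} :
    IsInvariant {(H₁.disjointUnion H₂).theta i} g ↔
      IsInvariant {H₁.theta i} (g ∘ Sum.inl) ∧ IsInvariant {H₂.theta i} (g ∘ Sum.inr) := by
  simpa only [Set.image_singleton] using isInvariant_disjointUnion {i}

/-- The orbits of a disjoint union are the orbits of the two summands. -/
def disjointUnionOrbitEquiv (H₁ : PreHypermap F₁) (H₂ : PreHypermap F₂) (I : Set (Fin 3)) :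
    Quotient (orbitSetoid ((H₁.disjointUnion H₂).theta '' I)) ≃
      Quotient (orbitSetoid (H₁.theta '' I)) ⊕ Quotient (orbitSetoid (H₂.theta '' I)) where
  toFun := Quotient.lift (Sum.map (Quotient.mk _) (Quotient.mk _)) fun _ _ =>
    ((isInvariant_disjointUnion (g := Sum.map (Quotient.mk _) (Quotient.mk _)) I).2
      ⟨fun f hf z => congrArg Sum.inl (isInvariant_quotientMk _ f hf z),
        fun f hf z => congrArg Sum.inr (isInvariant_quotientMk _ f hf z)⟩).eq_of_orbitRel
  invFun := Sum.elim
    (Quotient.lift (Quotient.mk _ ∘ Sum.inl) fun _ _ =>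
      ((isInvariant_disjointUnion I).1 (isInvariant_quotientMk _)).1.eq_of_orbitRel)
    (Quotient.lift (Quotient.mk _ ∘ Sum.inr) fun _ _ =>
      ((isInvariant_disjointUnion I).1 (isInvariant_quotientMk _)).2.eq_of_orbitRel)
  left_inv := by rintro ⟨z | z⟩ <;> rfl
  right_inv := by rintro (z | z) <;> induction z using Quotient.ind <;> rfl

variable [Finite F₁] [Finite F₂] (H₁ : PreHypermap F₁) (H₂ : PreHypermap F₂)

lemma orbitCount_disjointUnion (I : Set (Fin 3)) :
    orbitCount ((H₁.disjointUnion H₂).theta '' I) =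
      orbitCount (H₁.theta '' I) + orbitCount (H₂.theta '' I) := by
  rw [orbitCount, Nat.card_congr (disjointUnionOrbitEquiv H₁ H₂ I), Nat.card_sum, orbitCount,
    orbitCount]

lemma disjointUnion_v : (H₁.disjointUnion H₂).v = H₁.v + H₂.v := by
  simpa only [v, Set.image_pair] using orbitCount_disjointUnion H₁ H₂ {1, 2}

lemma disjointUnion_e : (H₁.disjointUnion H₂).e = H₁.e + H₂.e := by
  simpa only [e, Set.image_pair] using orbitCount_disjointUnion H₁ H₂ {0, 2}

end DisjointUnion

/-! ### Invariant functions on a bar-amalgamation -/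

section Bar

/-- The connecting hyperedge of a bar-amalgamation, as a hypermap on the flags
`{p, q, p', q'} = Fin 4`. The involution of index `1` is irrelevant. -/
def barEdge : PreHypermap (Fin 4) where
  theta := ![Equiv.swap 0 2 ∘ Equiv.swap 1 3, id, Equiv.swap 0 1 ∘ Equiv.swap 2 3]

lemma isInvariant_barEdge_theta_zero {α : Type*} {g : Fin 4 → α} :
    IsInvariant {barEdge.theta 0} g ↔ g 0 = g 2 ∧ g 1 = g 3 := by
  rw [isInvariant_singleton]
  constructor
  · exact fun hg => ⟨hg 2, hg 3⟩
  · rintro ⟨h₀, h₁⟩ k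
    fin_cases k
    exacts [h₀.symm, h₁.symm, h₀, h₁]

lemma isInvariant_barEdge_theta_two {α : Type*} {g : Fin 4 → α} :
    IsInvariant {barEdge.theta 2} g ↔ g 0 = g 1 ∧ g 2 = g 3 := by
  rw [isInvariant_singleton]
  constructor
  · exact fun hg => ⟨hg 1, hg 3⟩
  · rintro ⟨h₀, h₁⟩ k
    fin_cases k
    exacts [h₀.symm, h₀, h₁.symm, h₁]

lemma isInvariant_barEdge {α : Type*} {g : Fin 4 → α} :
    IsInvariant {barEdge.theta 0, barEdge.theta 2} g ↔ ∀ k, g k = g 0 := by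
  rw [isInvariant_insert, isInvariant_barEdge_theta_zero, isInvariant_barEdge_theta_two]
  refine ⟨fun ⟨⟨h₀₂, h₁₃⟩, h₀₁, _⟩ k => ?_, fun h => ⟨⟨(h 2).symm, (h 1).trans (h 3).symm⟩,
    (h 1).symm, (h 2).trans (h 3).symm⟩⟩
  fin_cases k
  exacts [rfl, h₀₁.symm, h₀₂.symm, h₁₃.symm.trans h₀₁.symm]

lemma barEdge_e : barEdge.e = 1 :=
  Nat.card_eq_one_iff_exists.2
    ⟨_, Quotient.ind (isInvariant_barEdge.1 (isInvariant_quotientMk _))⟩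

variable {F₁ F₂ α : Type*} {H₁ : PreHypermap F₁} {H₂ : PreHypermap F₂} {x : F₁} {y : F₂}

lemma bar_theta_of_ne_one {i : Fin 3} (hi : i ≠ 1) :
    (bar H₁ H₂ x y).theta i = ((H₁.disjointUnion H₂).disjointUnion barEdge).theta i := by
  funext z
  fin_cases i
  · rcases z with (z | z) | z <;> rfl
  · exact absurd rfl hi
  · rcases z with (z | z) | z <;> rfl

lemma bar_theta_one_inl_inl (z : F₁) : (bar H₁ H₂ x y).theta 1 (.inl (.inl z)) =
    if z = x then .inr 0 else if z = H₁.theta 1 x then .inr 1 else .inl (.inl (H₁.theta 1 z)) := by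
  simp [bar]

lemma bar_theta_one_inl_inr (z : F₂) : (bar H₁ H₂ x y).theta 1 (.inl (.inr z)) =
    if z = y then .inr 2 else if z = H₂.theta 1 y then .inr 3 else .inl (.inr (H₂.theta 1 z)) := by
  simp [bar]

lemma bar_theta_one_inr (k : Fin 4) : (bar H₁ H₂ x y).theta 1 (.inr k) =
    .inl (![.inl x, .inl (H₁.theta 1 x), .inr y, .inr (H₂.theta 1 y)] k) := by
  fin_cases k <;> simp [bar]

lemma isInvariant_bar_of_ne_one {i : Fin 3} (hi : i ≠ 1) {g : (F₁ ⊕ F₂) ⊕ Fin 4 → α} :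
    IsInvariant {(bar H₁ H₂ x y).theta i} g ↔
      IsInvariant {(H₁.disjointUnion H₂).theta i} (g ∘ Sum.inl) ∧
        IsInvariant {barEdge.theta i} (g ∘ Sum.inr) := by
  rw [bar_theta_of_ne_one hi, isInvariant_disjointUnion_theta]

lemma isInvariant_bar_theta_one {g : (F₁ ⊕ F₂) ⊕ Fin 4 → α} :
    IsInvariant {(bar H₁ H₂ x y).theta 1} g ↔
      IsInvariantOffCorner (H₁.theta 1) x (g ∘ Sum.inl ∘ Sum.inl) ∧
        IsInvariantOffCorner (H₂.theta 1) y (g ∘ Sum.inl ∘ Sum.inr) ∧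
        ∀ k, g (.inl (![.inl x, .inl (H₁.theta 1 x), .inr y, .inr (H₂.theta 1 y)] k)) =
          g (.inr k) := by
  rw [isInvariant_singleton]
  constructor
  · intro hg
    refine ⟨fun z hzx hzax => ?_, fun z hzy hzay => ?_, fun k => ?_⟩
    · simpa only [bar_theta_one_inl_inl, if_neg hzx, if_neg hzax] using! hg (.inl (.inl z))
    · simpa only [bar_theta_one_inl_inr, if_neg hzy, if_neg hzay] using! hg (.inl (.inr z))
    · simpa only [bar_theta_one_inr] using hg (.inr k)
  · rintro ⟨hoff₁, hoff₂, hconn⟩ ((z | z) | k)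
    · rw [bar_theta_one_inl_inl]
      split_ifs with hzx hzax
      exacts [hzx ▸ (hconn 0).symm, hzax ▸ (hconn 1).symm, hoff₁ z hzx hzax]
    · rw [bar_theta_one_inl_inr]
      split_ifs with hzy hzay
      exacts [hzy ▸ (hconn 2).symm, hzay ▸ (hconn 3).symm, hoff₂ z hzy hzay]
    · rw [bar_theta_one_inr, hconn k]

/-- Shrinks the connecting hyperedge of a bar-amalgamation back onto the two corners it meets. -/
def barCollapse (x : F₁) (y : F₂) : (F₁ ⊕ F₂) ⊕ Fin 4 → F₁ ⊕ F₂ :=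
  Sum.elim id ![.inl x, .inl x, .inr y, .inr y]

lemma leftInverse_barCollapse (x : F₁) (y : F₂) :
    Function.LeftInverse (barCollapse x y) Sum.inl := fun _ => rfl

lemma comp_barCollapse_eq_iff {g : (F₁ ⊕ F₂) ⊕ Fin 4 → α} :
    (g ∘ Sum.inl) ∘ barCollapse x y = g ↔
      (g (.inl (.inl x)) = g (.inr 0) ∧ g (.inl (.inl x)) = g (.inr 1)) ∧
        g (.inl (.inr y)) = g (.inr 2) ∧ g (.inl (.inr y)) = g (.inr 3) := by
  simp [funext_iff, Sum.forall, Fin.forall_fin_succ, barCollapse, and_assoc]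

lemma isInvariant_bar_theta_one_and_ends_iff (h₁ : H₁.IsHypermap) (h₂ : H₂.IsHypermap)
    {g : (F₁ ⊕ F₂) ⊕ Fin 4 → α} :
    (IsInvariant {(bar H₁ H₂ x y).theta 1} g ∧ g (.inr 0) = g (.inr 1) ∧ g (.inr 2) = g (.inr 3)) ↔
      IsInvariant {(H₁.disjointUnion H₂).theta 1} (g ∘ Sum.inl) ∧
        (g ∘ Sum.inl) ∘ barCollapse x y = g := by
  rw [isInvariant_bar_theta_one, isInvariant_disjointUnion_theta,
    isInvariant_iff_offCorner (h₁ 1).1 x, isInvariant_iff_offCorner (h₂ 1).1 y,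
    comp_barCollapse_eq_iff]
  constructor
  · rintro ⟨⟨hoff₁, hoff₂, hconn⟩, h₀₁, h₂₃⟩
    have hx : g (.inl (.inl (H₁.theta 1 x))) = g (.inl (.inl x)) :=
      (hconn 1).trans (h₀₁.symm.trans (hconn 0).symm)
    have hy : g (.inl (.inr (H₂.theta 1 y))) = g (.inl (.inr y)) :=
      (hconn 3).trans (h₂₃.symm.trans (hconn 2).symm)
    exact ⟨⟨⟨hoff₁, hx⟩, hoff₂, hy⟩, ⟨hconn 0, hx.symm.trans (hconn 1)⟩,
      hconn 2, hy.symm.trans (hconn 3)⟩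
  · rintro ⟨⟨⟨hoff₁, hx⟩, hoff₂, hy⟩, ⟨hx₀, hx₁⟩, hy₂, hy₃⟩
    refine ⟨⟨hoff₁, hoff₂, fun k => ?_⟩, hx₀.symm.trans hx₁, hy₂.symm.trans hy₃⟩
    fin_cases k
    exacts [hx₀, hx.trans hx₁, hy₂, hy.trans hy₃]

lemma isInvariant_bar_vertices (h₁ : H₁.IsHypermap) (h₂ : H₂.IsHypermap)
    {g : (F₁ ⊕ F₂) ⊕ Fin 4 → α} :
    IsInvariant {(bar H₁ H₂ x y).theta 1, (bar H₁ H₂ x y).theta 2} g ↔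
      IsInvariant {(H₁.disjointUnion H₂).theta 1, (H₁.disjointUnion H₂).theta 2} (g ∘ Sum.inl) ∧
        (g ∘ Sum.inl) ∘ barCollapse x y = g := by
  rw [isInvariant_insert, isInvariant_insert, isInvariant_bar_of_ne_one (i := 2) (by decide),
    isInvariant_barEdge_theta_two, and_right_comm, ← isInvariant_bar_theta_one_and_ends_iff h₁ h₂,
    and_right_comm, and_assoc]
  rfl

lemma isInvariant_bar_faces [Finite F₁] [Finite F₂] {K : Type*} [Ring K] [CharP K 2]
    (h₁ : H₁.IsHypermap) (h₂ : H₂.IsHypermap) {g : (F₁ ⊕ F₂) ⊕ Fin 4 → K} :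
    IsInvariant {(bar H₁ H₂ x y).theta 0, (bar H₁ H₂ x y).theta 1} g ↔
      (IsInvariant {(H₁.disjointUnion H₂).theta 0, (H₁.disjointUnion H₂).theta 1} (g ∘ Sum.inl) ∧
        g (.inl (.inl x)) = g (.inl (.inr y))) ∧ (g ∘ Sum.inl) ∘ barCollapse x y = g := by
  rw [isInvariant_insert, isInvariant_insert, isInvariant_bar_of_ne_one (by decide),
    isInvariant_barEdge_theta_zero]
  constructor
  · rintro ⟨⟨hg₀, h₀₂, -⟩, hg₁⟩
    have ⟨hg₀₁, hg₀₂⟩ := (isInvariant_disjointUnion_theta 0).1 hg₀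
    have ⟨hoff₁, hoff₂, hconn⟩ := isInvariant_bar_theta_one.1 hg₁
    have ends₁ : g (.inr 0) = g (.inr 1) := (hconn 0).symm.trans <| Eq.trans
      (hoff₁.apply_eq (h₁ 0).1 (h₁ 0).2 (h₁ 1).1 (h₁ 1).2 hg₀₁).symm (hconn 1)
    have ends₂ : g (.inr 2) = g (.inr 3) := (hconn 2).symm.trans <| Eq.trans
      (hoff₂.apply_eq (h₂ 0).1 (h₂ 0).2 (h₂ 1).1 (h₂ 1).2 hg₀₂).symm (hconn 3)
    have ⟨hD, hcollapse⟩ := (isInvariant_bar_theta_one_and_ends_iff h₁ h₂).1 ⟨hg₁, ends₁, ends₂⟩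
    exact ⟨⟨⟨hg₀, hD⟩, (hconn 0).trans (h₀₂.trans (hconn 2).symm)⟩, hcollapse⟩
  · rintro ⟨⟨⟨hg₀, hD⟩, hxy⟩, hcollapse⟩
    have ⟨⟨hx₀, hx₁⟩, hy₂, hy₃⟩ := comp_barCollapse_eq_iff.1 hcollapse
    exact ⟨⟨hg₀, hx₀.symm.trans (hxy.trans hy₂), hx₁.symm.trans (hxy.trans hy₃)⟩,
      ((isInvariant_bar_theta_one_and_ends_iff h₁ h₂).2 ⟨hD, hcollapse⟩).1⟩

lemma isInvariant_bar_components [Finite F₁] [Finite F₂] {K : Type*} [Ring K] [CharP K 2]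
    (h₁ : H₁.IsHypermap) (h₂ : H₂.IsHypermap) {g : (F₁ ⊕ F₂) ⊕ Fin 4 → K} :
    IsInvariant {(bar H₁ H₂ x y).theta 0, (bar H₁ H₂ x y).theta 1, (bar H₁ H₂ x y).theta 2} g ↔
      (IsInvariant {(H₁.disjointUnion H₂).theta 0, (H₁.disjointUnion H₂).theta 1,
          (H₁.disjointUnion H₂).theta 2} (g ∘ Sum.inl) ∧
        g (.inl (.inl x)) = g (.inl (.inr y))) ∧ (g ∘ Sum.inl) ∘ barCollapse x y = g := by
  have faces := isInvariant_bar_faces h₁ h₂ (x := x) (y := y) (g := g)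
  have vertices := isInvariant_bar_vertices h₁ h₂ (x := x) (y := y) (g := g)
  simp only [isInvariant_insert] at faces vertices ⊢
  tauto

end Bar

/-! ### The Euler genus of a bar-amalgamation -/

section BarEulerGenus

variable {F₁ F₂ K : Type*}

lemma finrank_inf_ker_add_one [Field K] {V : Type*} [AddCommGroup V] [Module K V]
    [FiniteDimensional K V] {P : Submodule K V} {φ : Module.Dual K V} (hφ : ∃ g ∈ P, φ g ≠ 0) :
    Module.finrank K ↥(P ⊓ LinearMap.ker φ) + 1 = Module.finrank K P := by
  obtain ⟨g, hg, hφg⟩ := hφ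
  have restrict_ne_zero : φ.domRestrict P ≠ 0 := fun h => hφg (LinearMap.congr_fun h ⟨g, hg⟩)
  rw [← Module.Dual.finrank_ker_add_one_of_ne_zero restrict_ne_zero, LinearMap.ker_domRestrict,
    ← Submodule.finrank_map_subtype_eq, Submodule.map_comap_subtype]

lemma finrank_eq_of_mem_iff_of_leftInverse [Ring K] {Z W : Type*} {c : Z → W} {s : W → Z}
    (hcs : Function.LeftInverse c s) {Q : Submodule K (Z → K)} {P : Submodule K (W → K)}
    (h : ∀ g, g ∈ Q ↔ g ∘ s ∈ P ∧ (g ∘ s) ∘ c = g) : Module.finrank K Q = Module.finrank K P := by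
  have Q_eq : Q = P.map (LinearMap.funLeft K K c) := by
    ext g
    rw [h, Submodule.mem_map]
    refine ⟨fun ⟨hP, hg⟩ => ⟨g ∘ s, hP, hg⟩, ?_⟩
    rintro ⟨k, hk, rfl⟩
    have comp_eq : LinearMap.funLeft K K c k ∘ s = k := funext fun w => congrArg k (hcs w)
    exact ⟨comp_eq.symm ▸ hk, congrArg (· ∘ c) comp_eq⟩
  rw [Q_eq]
  exact (Submodule.equivMapOfInjective _
    (LinearMap.funLeft_injective_of_surjective K K c hcs.surjective) P).finrank_eq.symm

variable [Finite F₁] [Finite F₂] {H₁ : PreHypermap F₁} {H₂ : PreHypermap F₂} {x : F₁} {y : F₂}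

lemma bar_e (H₁ : PreHypermap F₁) (H₂ : PreHypermap F₂) (x : F₁) (y : F₂) :
    (bar H₁ H₂ x y).e = H₁.e + H₂.e + 1 := by
  rw [e, bar_theta_of_ne_one (by decide), bar_theta_of_ne_one (by decide), ← e, disjointUnion_e,
    disjointUnion_e, barEdge_e]

lemma bar_v (h₁ : H₁.IsHypermap) (h₂ : H₂.IsHypermap) (x : F₁) (y : F₂) :
    (bar H₁ H₂ x y).v = H₁.v + H₂.v := by
  rw [← disjointUnion_v, v, v, ← finrank_invariants (ZMod 2), ← finrank_invariants (ZMod 2)]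
  exact finrank_eq_of_mem_iff_of_leftInverse (leftInverse_barCollapse x y) fun _ =>
    isInvariant_bar_vertices h₁ h₂

/-- Agreeing at `x` and `y` is one linear condition on the invariant functions of `H₁ ⊔ H₂`,
violated by the indicator function of `H₁`. -/
lemma orbitCount_bar_add_one {I : Set (Fin 3)}
    (h : ∀ g : (F₁ ⊕ F₂) ⊕ Fin 4 → ZMod 2, IsInvariant ((bar H₁ H₂ x y).theta '' I) g ↔
      (IsInvariant ((H₁.disjointUnion H₂).theta '' I) (g ∘ Sum.inl) ∧
        g (.inl (.inl x)) = g (.inl (.inr y))) ∧ (g ∘ Sum.inl) ∘ barCollapse x y = g) :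
    orbitCount ((bar H₁ H₂ x y).theta '' I) + 1 =
      orbitCount (H₁.theta '' I) + orbitCount (H₂.theta '' I) := by
  let φ : Module.Dual (ZMod 2) (F₁ ⊕ F₂ → ZMod 2) :=
    LinearMap.proj (.inl x) - LinearMap.proj (.inr y)
  let indicator : F₁ ⊕ F₂ → ZMod 2 := Sum.elim (fun _ => 1) (fun _ => 0)
  have indicator_mem : indicator ∈ invariants _ ((H₁.disjointUnion H₂).theta '' I) :=
    (isInvariant_disjointUnion I).2 ⟨fun _ _ _ => rfl, fun _ _ _ => rfl⟩
  have φ_indicator : φ indicator ≠ 0 := by simp [φ, indicator]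
  rw [← orbitCount_disjointUnion, ← finrank_invariants (ZMod 2), ← finrank_invariants (ZMod 2),
    ← finrank_inf_ker_add_one ⟨_, indicator_mem, φ_indicator⟩]
  congr 1
  refine finrank_eq_of_mem_iff_of_leftInverse (leftInverse_barCollapse x y) fun g =>
    (h g).trans ?_
  rw [Submodule.mem_inf, LinearMap.mem_ker, LinearMap.sub_apply, sub_eq_zero]
  rfl

lemma bar_f (h₁ : H₁.IsHypermap) (h₂ : H₂.IsHypermap) (x : F₁) (y : F₂) :
    (bar H₁ H₂ x y).f + 1 = H₁.f + H₂.f := by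
  simpa only [PreHypermap.f, Set.image_pair] using
    orbitCount_bar_add_one (I := {0, 1}) fun g => by
      simpa only [Set.image_pair] using isInvariant_bar_faces h₁ h₂

lemma bar_c (h₁ : H₁.IsHypermap) (h₂ : H₂.IsHypermap) (x : F₁) (y : F₂) :
    (bar H₁ H₂ x y).c + 1 = H₁.c + H₂.c := by
  simpa only [c, Set.image_insert_eq, Set.image_singleton] using
    orbitCount_bar_add_one (I := {0, 1, 2}) fun g => by
      simpa only [Set.image_insert_eq, Set.image_singleton] using isInvariant_bar_components h₁ h₂

lemma bar_eulerGenus (h₁ : H₁.IsHypermap) (h₂ : H₂.IsHypermap) (x : F₁) (y : F₂) :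
    (bar H₁ H₂ x y).eulerGenus = H₁.eulerGenus + H₂.eulerGenus := by
  have vertices := bar_v h₁ h₂ x y
  have faces := bar_f h₁ h₂ x y
  have components := bar_c h₁ h₂ x y
  have even₁ := (even_card_of_involutive (h₁ 0).1 (h₁ 0).2).two_dvd
  have even₂ := (even_card_of_involutive (h₂ 0).1 (h₂ 0).2).two_dvd
  simp only [eulerGenus, chi, bar_e, vertices, Nat.card_sum, Nat.card_fin]
  omega

end BarEulerGenus

/-! ### Partial duals -/

section PartialDual

variable {F : Type*} {H : PreHypermap F} {S : Set F}

lemma dual_eulerGenus (H : PreHypermap F) : H.dual.eulerGenus = H.eulerGenus := by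
  have v_eq : H.dual.v = H.f := congrArg orbitCount (Set.pair_comm _ _)
  have e_eq : H.dual.e = H.e := congrArg orbitCount (Set.pair_comm _ _)
  have f_eq : H.dual.f = H.v := congrArg orbitCount (Set.pair_comm _ _)
  have c_eq : H.dual.c = H.c := by
    change orbitCount {H.theta 2, H.theta 1, H.theta 0} = _
    rw [Set.insert_comm, Set.pair_comm, Set.insert_comm, c]
  rw [eulerGenus, eulerGenus, chi, chi, v_eq, e_eq, f_eq, c_eq]
  ring

lemma pdual_theta (H : PreHypermap F) (S : Set F) (i : Fin 3) (z : F) :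
    (H.pdual S).theta i z = if z ∈ S then H.theta (2 - i) z else H.theta i z := by
  by_cases hi : i = 1
  · subst hi
    exact (ite_self (H.theta 1 z)).symm
  · exact if_neg hi

lemma pdual_compl (H : PreHypermap F) (S : Set F) : H.pdual Sᶜ = (H.pdual S).dual := by
  refine congrArg PreHypermap.mk (funext₂ fun i z => ?_)
  change (H.pdual Sᶜ).theta i z = (H.pdual S).theta (2 - i) z
  rw [pdual_theta, pdual_theta, sub_sub_cancel]
  simp only [Set.mem_compl_iff, ite_not]

lemma pdual_compl_eulerGenus (H : PreHypermap F) (S : Set F) :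
    (H.pdual Sᶜ).eulerGenus = (H.pdual S).eulerGenus := by
  rw [pdual_compl, dual_eulerGenus]

/-- `S` is a union of hyperedges of `H`. -/
def IsSaturated (H : PreHypermap F) (S : Set F) : Prop :=
  IsInvariant {H.theta 0, H.theta 2} (· ∈ S)

lemma IsSaturated.theta_mem_iff (hS : H.IsSaturated S) {i : Fin 3} (hi : i ≠ 1) (z : F) :
    H.theta i z ∈ S ↔ z ∈ S :=
  iff_of_eq <| hS _ (by fin_cases i <;> simp at hi ⊢) z

lemma IsSaturated.compl (hS : H.IsSaturated S) : H.IsSaturated Sᶜ := fun a ha z =>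
  congrArg Not (hS a ha z)

lemma IsSaturated.pdual_isHypermap (hS : H.IsSaturated S) (h : H.IsHypermap) :
    (H.pdual S).IsHypermap := by
  intro i
  by_cases hi : i = 1
  · have theta_eq : (H.pdual S).theta i = H.theta i := funext fun z => by
      rw [pdual_theta, hi]
      exact ite_self _
    exact theta_eq.symm ▸ h i
  have hi' : 2 - i ≠ 1 := by omega
  refine ⟨fun z => ?_, fun z => ?_⟩ <;> by_cases hz : z ∈ S <;>
    simp only [pdual_theta, hz, hS.theta_mem_iff hi, hS.theta_mem_iff hi', if_true, if_false]
  exacts [(h _).1 z, (h _).1 z, (h _).2 z, (h _).2 z]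

lemma edges_eq_classes (H : PreHypermap F) :
    H.edges = (orbitSetoid {H.theta 0, H.theta 2}).classes := by
  have setOf_eq (x : F) : {y | orbitRel {H.theta 0, H.theta 2} x y} =
      {y | orbitSetoid {H.theta 0, H.theta 2} y x} :=
    Set.ext fun _ => ⟨Relation.EqvGen.symm _ _, Relation.EqvGen.symm _ _⟩
  simp only [edges, setOf_eq, Setoid.classes]

lemma isSaturated_sUnion {A : Set (Set F)} (hA : A ⊆ H.edges) : H.IsSaturated (⋃₀ A) := by
  intro a ha z
  have rel : orbitRel {H.theta 0, H.theta 2} z (a z) := Relation.EqvGen.rel _ _ ⟨a, ha, rfl⟩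
  refine propext ⟨fun ⟨s, hs, haz⟩ => ⟨s, hs, ?_⟩, fun ⟨s, hs, hz⟩ => ⟨s, hs, ?_⟩⟩ <;>
    obtain ⟨x, rfl⟩ := hA hs
  · exact Relation.EqvGen.trans _ _ _ haz (Relation.EqvGen.symm _ _ rel)
  · exact Relation.EqvGen.trans _ _ _ hz rel

lemma IsSaturated.sUnion_edges_subset (hS : H.IsSaturated S) :
    ⋃₀ {s ∈ H.edges | s ⊆ S} = S := by
  refine subset_antisymm (Set.sUnion_subset fun s hs => hs.2) fun z hz => ?_
  refine Set.mem_sUnion.2 ⟨_, ⟨⟨z, rfl⟩, fun y hy => ?_⟩, Relation.EqvGen.refl z⟩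
  exact (hS.eq_of_orbitRel hy).mp hz

lemma subset_of_sUnion_subset_sUnion {A B : Set (Set F)} (hA : A ⊆ H.edges) (hB : B ⊆ H.edges)
    (h : ⋃₀ A ⊆ ⋃₀ B) : A ⊆ B := by
  rw [edges_eq_classes] at hA hB
  have partition := Setoid.isPartition_classes (orbitSetoid {H.theta 0, H.theta 2})
  have disjoint : (A ∪ B).PairwiseDisjoint id :=
    partition.pairwiseDisjoint.subset (Set.union_subset hA hB)
  rw [Set.sUnion_eq_biUnion, Set.sUnion_eq_biUnion] at h
  exact disjoint.subset_of_biUnion_subset_biUnion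
    (fun s hs => Setoid.nonempty_of_mem_partition partition (hA hs)) h

lemma bijOn_sUnion_powerset_edges (H : PreHypermap F) :
    Set.BijOn Set.sUnion H.edges.powerset {S | H.IsSaturated S} :=
  ⟨fun _ hA => isSaturated_sUnion hA,
    fun _ hA _ hB h => (subset_of_sUnion_subset_sUnion hA hB h.le).antisymm
      (subset_of_sUnion_subset_sUnion hB hA h.ge),
    fun _ hS => ⟨_, fun _ hs => hs.1, hS.sUnion_edges_subset⟩⟩

lemma pdPoly_eq_sum_isSaturated [Fintype F] (H : PreHypermap F) :
    H.pdPoly = ∑ S : {S // H.IsSaturated S},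
      Polynomial.X ^ (H.pdual (S : Set F)).eulerGenus.toNat := by
  have ⟨mapsTo, injOn, surjOn⟩ := bijOn_sUnion_powerset_edges H
  have mem_iff (A : Finset (Set F)) : A ∈ H.edgeFinset.powerset ↔ (A : Set (Set F)) ⊆ H.edges := by
    rw [Finset.mem_powerset, edgeFinset, Set.Finite.subset_toFinset]
  refine Finset.sum_bij (fun A hA => ⟨⋃₀ (A : Set (Set F)), mapsTo ((mem_iff A).1 hA)⟩)
    (fun _ _ => Finset.mem_univ _) (fun A hA B hB h => ?_) (fun S _ => ?_) fun _ _ => rfl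
  · exact Finset.coe_injective
      (injOn ((mem_iff A).1 hA) ((mem_iff B).1 hB) (congrArg Subtype.val h))
  · obtain ⟨A, hA, hAS⟩ := surjOn S.2
    lift A to Finset (Set F) using Set.toFinite A
    exact ⟨A, (mem_iff A).2 hA, Subtype.ext hAS⟩

end PartialDual

/-! ### Partial duals of a bar-amalgamation -/

section BarPartialDual

variable {F₁ F₂ : Type*} {H₁ : PreHypermap F₁} {H₂ : PreHypermap F₂}

/-- The flag set of a bar-amalgamation that restricts to `S` and `T` on the two summands and
contains the connecting hyperedge iff `d` holds. -/
def barSet (S : Set F₁) (T : Set F₂) (d : Prop) : Set ((F₁ ⊕ F₂) ⊕ Fin 4) :=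
  {z | Sum.elim (Sum.elim (· ∈ S) (· ∈ T)) (fun _ => d) z}

lemma barSet_compl (S : Set F₁) (T : Set F₂) (d : Prop) :
    (barSet S T d)ᶜ = barSet Sᶜ Tᶜ (¬d) := by
  ext ((z | z) | k) <;> rfl

lemma isSaturated_bar_iff {x : F₁} {y : F₂} {R : Set ((F₁ ⊕ F₂) ⊕ Fin 4)} :
    (bar H₁ H₂ x y).IsSaturated R ↔
      (H₁.IsSaturated {z | .inl (.inl z) ∈ R} ∧ H₂.IsSaturated {z | .inl (.inr z) ∈ R}) ∧
        ∀ k : Fin 4, (Sum.inr k ∈ R) = (Sum.inr 0 ∈ R) := by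
  have union := isInvariant_disjointUnion (H₁ := H₁.disjointUnion H₂) (H₂ := barEdge) {0, 2}
    (g := (· ∈ R))
  have union' := isInvariant_disjointUnion (H₁ := H₁) (H₂ := H₂) {0, 2} (g := (· ∈ R) ∘ Sum.inl)
  rw [union', Set.image_pair, Set.image_pair, Set.image_pair, Set.image_pair, isInvariant_barEdge,
    ← bar_theta_of_ne_one (by decide), ← bar_theta_of_ne_one (by decide)] at union
  exact union

/-- A union of hyperedges of a bar-amalgamation amounts to one of `H₁`, one of `H₂`, and the choice
whether to include the connecting hyperedge. -/
def barSaturatedEquiv (x : F₁) (y : F₂) :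
    ({S // H₁.IsSaturated S} × {T // H₂.IsSaturated T}) × Prop ≃
      {R // (bar H₁ H₂ x y).IsSaturated R} where
  toFun p := ⟨barSet p.1.1.1 p.1.2.1 p.2,
    isSaturated_bar_iff.2 ⟨⟨p.1.1.2, p.1.2.2⟩, fun _ => rfl⟩⟩
  invFun R := ((⟨_, (isSaturated_bar_iff.1 R.2).1.1⟩, ⟨_, (isSaturated_bar_iff.1 R.2).1.2⟩),
    Sum.inr 0 ∈ R.1)
  left_inv _ := rfl
  right_inv R := Subtype.ext <| Set.ext <| by
    rintro ((z | z) | k)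
    exacts [Iff.rfl, Iff.rfl, iff_of_eq ((isSaturated_bar_iff.1 R.2).2 k).symm]

lemma bar_pdual_barSet_false (S : Set F₁) (T : Set F₂) (x : F₁) (y : F₂) :
    (bar H₁ H₂ x y).pdual (barSet S T False) = bar (H₁.pdual S) (H₂.pdual T) x y := by
  refine congrArg PreHypermap.mk (funext₂ fun i z => ?_)
  by_cases hi : i = 1
  · subst hi
    rfl
  have hi' : 2 - i ≠ 1 := by omega
  change ((bar H₁ H₂ x y).pdual (barSet S T False)).theta i z =
    (bar (H₁.pdual S) (H₂.pdual T) x y).theta i z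
  rw [pdual_theta, bar_theta_of_ne_one hi, bar_theta_of_ne_one hi', bar_theta_of_ne_one hi]
  rcases z with (z | z) | k
  · change _ = Sum.inl (Sum.inl ((H₁.pdual S).theta i z))
    rw [pdual_theta, apply_ite Sum.inl, apply_ite Sum.inl]
    rfl
  · change _ = Sum.inl (Sum.inr ((H₂.pdual T).theta i z))
    rw [pdual_theta, apply_ite Sum.inr, apply_ite Sum.inl]
    rfl
  · exact if_neg id

variable [Finite F₁] [Finite F₂]

lemma bar_pdual_barSet_eulerGenus (h₁ : H₁.IsHypermap) (h₂ : H₂.IsHypermap) {S : Set F₁}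
    (hS : H₁.IsSaturated S) {T : Set F₂} (hT : H₂.IsSaturated T) (d : Prop) (x : F₁) (y : F₂) :
    ((bar H₁ H₂ x y).pdual (barSet S T d)).eulerGenus =
      (H₁.pdual S).eulerGenus + (H₂.pdual T).eulerGenus := by
  by_cases hd : d
  · rw [eq_true hd, ← pdual_compl_eulerGenus, barSet_compl, not_true, bar_pdual_barSet_false,
      bar_eulerGenus (hS.compl.pdual_isHypermap h₁) (hT.compl.pdual_isHypermap h₂),
      pdual_compl_eulerGenus, pdual_compl_eulerGenus]
  · rw [eq_false hd, bar_pdual_barSet_false,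
      bar_eulerGenus (hS.pdual_isHypermap h₁) (hT.pdual_isHypermap h₂)]

end BarPartialDual

end PreHypermap

open PreHypermap in
theorem statement_14_general {F₁ F₂ : Type*} [Fintype F₁] [Fintype F₂]
    (H₁ : PreHypermap F₁) (H₂ : PreHypermap F₂)
    (h₁ : H₁.IsHypermap) (h₂ : H₂.IsHypermap) (x : F₁) (y : F₂) :
    (bar H₁ H₂ x y).pdPoly = 2 * H₁.pdPoly * H₂.pdPoly := by
  have genus (p : ({S // H₁.IsSaturated S} × {T // H₂.IsSaturated T}) × Prop) :
      ((bar H₁ H₂ x y).pdual (barSaturatedEquiv x y p : Set _)).eulerGenus.toNat =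
        (H₁.pdual (p.1.1 : Set F₁)).eulerGenus.toNat +
          (H₂.pdual (p.1.2 : Set F₂)).eulerGenus.toNat := by
    obtain ⟨⟨⟨S, hS⟩, T, hT⟩, d⟩ := p
    rw [← Int.toNat_add (hS.pdual_isHypermap h₁).eulerGenus_nonneg
      (hT.pdual_isHypermap h₂).eulerGenus_nonneg,
      ← bar_pdual_barSet_eulerGenus h₁ h₂ hS hT d x y]
    rfl
  simp only [pdPoly_eq_sum_isSaturated]
  rw [← (barSaturatedEquiv x y).sum_comp, mul_assoc, Finset.sum_mul_sum]
  simp only [genus, pow_add, Fintype.sum_prod_type, Finset.sum_const, Finset.card_univ,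
    Fintype.card_prop, nsmul_eq_mul, Nat.cast_ofNat, Finset.mul_sum]

open PreHypermap in
/-- For a bar-amalgamation of two connected hypermaps (the connecting hyperedge meeting
one corner of each), `∂ε_(H₁ ⊕ H₂)(z) = 2 · ∂ε_(H₁)(z) · ∂ε_(H₂)(z)`. -/
theorem statement_14 {F₁ F₂ : Type} [Fintype F₁] [Fintype F₂]
    (H₁ : PreHypermap F₁) (H₂ : PreHypermap F₂)
    (h₁ : H₁.IsHypermap) (h₂ : H₂.IsHypermap)
    (hc₁ : H₁.Connected) (hc₂ : H₂.Connected) (x : F₁) (y : F₂) :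
    (bar H₁ H₂ x y).pdPoly = 2 * H₁.pdPoly * H₂.pdPoly :=
  statement_14_general H₁ H₂ h₁ h₂ x y
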